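/- arXiv:2109.00595 — 2 statements merged into one kernel-verified Lean document; each statement's English description precedes it below -/
import Mathlib

section
/- Let r ≥ 1 be an integer, t > 0, and let f : ℝ → ℝ be a polynomial function of degree at most r−1, not identically zero. Then there exist a sign ε ∈ {+1, −1} and reals 0 ≤ s₁ ≤ s₂ ≤ ⋯ ≤ s_{r−1} ≤ t such that, setting s₀ := 0 and s_r := t, ∫₀ᵗ |f(s)| ds = ε · Σ_{q=0}^{r−1} (−1)^q ∫_{s_q}^{s_{q+1}} f(s) ds. -/
open intervalIntegral

/-!
Between consecutive zeros a continuous function has constant sign. Sweep through the zeros from left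
to right: at each of them the sign either flips, which opens a new piece of the partition, or
persists, which prolongs the current one. So `n` zeros give at most `n + 1` pieces of alternating
sign, and a nonzero polynomial of degree at most `r - 1` has at most `r - 1` zeros.
-/

open Set MeasureTheory

theorem exists_abs_eq_sign_mul_of_isPreconnected {X : Type*} [TopologicalSpace X] {S : Set X}
    {f : X → ℝ} (hS : IsPreconnected S) (hf : ContinuousOn f S) (hne : ∀ x ∈ S, f x ≠ 0) :
    ∃ η : ℝ, (η = 1 ∨ η = -1) ∧ ∀ x ∈ S, |f x| = η * f x := by
  have h_sq : EqOn ((fun x => |f x|) ^ 2) (f ^ 2) S := fun x _ => sq_abs (f x)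
  rcases hS.eq_or_eq_neg_of_sq_eq hf.abs hf h_sq (hne _) with h | h
  · exact ⟨1, .inl rfl, fun x hx => by simpa using h hx⟩
  · exact ⟨-1, .inr rfl, fun x hx => by simpa using h hx⟩

/-- A partition `a = s 0 ≤ s 1 ≤ ⋯ ≤ s n = b` on whose successive open pieces the function `f` has
the weak signs `ε, -ε, ε, …`. The sequence `s` is indexed by `ℕ` and stays at `b` from index `n` on,
and pieces may be empty, so that `n` is only a bound for the number of pieces. -/
structure IsAlternatingPartition (f : ℝ → ℝ) (a b ε : ℝ) (n : ℕ) (s : ℕ → ℝ) : Prop where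
  sign_eq : ε = 1 ∨ ε = -1
  monotone : Monotone s
  left_eq : s 0 = a
  right_eq : ∀ k, n ≤ k → s k = b
  abs_eq : ∀ q, ∀ x ∈ Ioo (s q) (s (q + 1)), |f x| = ε * (-1) ^ q * f x

namespace IsAlternatingPartition

variable {f : ℝ → ℝ} {a b c ε : ℝ} {m n : ℕ} {s : ℕ → ℝ}

theorem mono_pieces (h : IsAlternatingPartition f a b ε m s) (hmn : m ≤ n) :
    IsAlternatingPartition f a b ε n s :=
  { h with right_eq := fun k hk => h.right_eq k (hmn.trans hk) }

theorem le_right (h : IsAlternatingPartition f a b ε n s) (k : ℕ) : s k ≤ b :=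
  (h.monotone (le_max_left k n)).trans_eq (h.right_eq _ (le_max_right k n))

theorem of_abs_eq (hab : a ≤ b) (hε : ε = 1 ∨ ε = -1)
    (hf : ∀ x ∈ Ioo a b, |f x| = ε * f x) :
    IsAlternatingPartition f a b ε 1 (fun k => if k = 0 then a else b) where
  sign_eq := hε
  monotone := monotone_nat_of_le_succ fun k => by rcases k with _ | k <;> simp [hab]
  left_eq := if_pos rfl
  right_eq _ hk := if_neg (Nat.one_le_iff_ne_zero.mp hk)
  abs_eq q x hx := by
    rcases q with _ | q
    · simpa using hf x (by simpa using hx)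
    · simp at hx

/- Both parities of `m` are useful: `m + 1 = n` prolongs the last piece of `s` up to `b`, whereas
`m = n` adds the piece `(c, b)`. -/
theorem extend (h : IsAlternatingPartition f a c ε n s) (hnm : n ≤ m + 1) (hcb : c ≤ b)
    (hc : f c = 0) (hf : ∀ x ∈ Ioo c b, |f x| = ε * (-1) ^ m * f x) :
    IsAlternatingPartition f a b ε (m + 1) (fun k => if k ≤ m then s k else b) where
  sign_eq := h.sign_eq
  monotone i j hij := by
    have hsb : s i ≤ b := (h.le_right i).trans hcb
    have hs : s i ≤ s j := h.monotone hij
    grind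
  left_eq := by simpa using h.left_eq
  right_eq k hk := if_neg (Nat.not_le.mpr hk)
  abs_eq q x hx := by
    rcases lt_trichotomy q m with hq | rfl | hq
    · exact h.abs_eq q x (by simpa [hq.le, Nat.succ_le_of_lt hq] using hx)
    · obtain ⟨hsx, hxb⟩ : s q < x ∧ x < b := by simpa using hx
      rcases lt_trichotomy x c with hxc | rfl | hcx
      · exact h.abs_eq q x ⟨hsx, hxc.trans_eq (h.right_eq _ hnm).symm⟩
      · simp [hc]
      · exact hf x ⟨hcx, hxb⟩
    · simp [hq.not_ge, (hq.trans q.lt_succ_self).not_ge] at hx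

theorem exists_extend (h : IsAlternatingPartition f a c ε (n + 1) s) (hcb : c ≤ b) (hc : f c = 0)
    (hf : ContinuousOn f (Ioo c b)) (hne : ∀ x ∈ Ioo c b, f x ≠ 0) :
    ∃ s', IsAlternatingPartition f a b ε (n + 2) s' := by
  obtain ⟨η, hη, hfη⟩ := exists_abs_eq_sign_mul_of_isPreconnected isPreconnected_Ioo hf hne
  have hη_parity : η = ε * (-1) ^ n ∨ η = ε * (-1) ^ (n + 1) := by
    rcases hη with rfl | rfl <;> rcases h.sign_eq with rfl | rfl <;>
      rcases neg_one_pow_eq_or ℝ n with hn | hn <;> simp [pow_succ, hn]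
  rcases hη_parity with rfl | rfl
  · exact ⟨_, (h.extend le_rfl hcb hc hfη).mono_pieces (Nat.le_succ _)⟩
  · exact ⟨_, h.extend (Nat.le_succ _) hcb hc hfη⟩

theorem integral_abs_eq (h : IsAlternatingPartition f a b ε n s)
    (hf : IntervalIntegrable f volume a b) :
    ∫ x in a..b, |f x| =
      ε * ∑ q ∈ Finset.range n, (-1 : ℝ) ^ q * ∫ x in (s q)..(s (q + 1)), f x := by
  have hs_mem (k : ℕ) : s k ∈ uIcc a b :=
    Icc_subset_uIcc ⟨h.left_eq.symm.trans_le (h.monotone k.zero_le), h.le_right k⟩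
  have h_integrable (q : ℕ) : IntervalIntegrable (fun x => |f x|) volume (s q) (s (q + 1)) :=
    hf.abs.mono_set (uIcc_subset_uIcc (hs_mem q) (hs_mem (q + 1)))
  have h_piece (q : ℕ) :
      ∫ x in (s q)..(s (q + 1)), |f x| = ε * (-1) ^ q * ∫ x in (s q)..(s (q + 1)), f x := by
    rw [← intervalIntegral.integral_const_mul]
    exact integral_congr_Ioo_of_le (h.monotone q.le_succ) (h.abs_eq q)
  calc ∫ x in a..b, |f x|
      = ∫ x in (s 0)..(s n), |f x| := by rw [h.left_eq, h.right_eq n le_rfl]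
    _ = ∑ q ∈ Finset.range n, ∫ x in (s q)..(s (q + 1)), |f x| :=
      (sum_integral_adjacent_intervals fun q _ => h_integrable q).symm
    _ = ε * ∑ q ∈ Finset.range n, (-1 : ℝ) ^ q * ∫ x in (s q)..(s (q + 1)), f x := by
      simp only [h_piece, Finset.mul_sum, mul_assoc]

end IsAlternatingPartition

theorem exists_isAlternatingPartition {f : ℝ → ℝ} {a b : ℝ} (hab : a ≤ b)
    (hf : ContinuousOn f (Ioo a b)) (Z : Finset ℝ) (hZ : ∀ x ∈ Ioo a b, f x = 0 → x ∈ Z) :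
    ∃ ε s, IsAlternatingPartition f a b ε (Z.card + 1) s := by
  induction Z using Finset.induction_on_max generalizing b with
  | empty =>
    obtain ⟨η, hη, hfη⟩ := exists_abs_eq_sign_mul_of_isPreconnected isPreconnected_Ioo hf
      fun x hx h0 => Finset.notMem_empty x (hZ x hx h0)
    exact ⟨η, _, .of_abs_eq hab hη hfη⟩
  | insert c Z hlt ih =>
    rw [Finset.card_insert_of_notMem fun hc => (hlt c hc).false]
    by_cases hc : c ∈ Ioo a b ∧ f c = 0
    · obtain ⟨⟨hac, hcb⟩, hfc⟩ := hc
      obtain ⟨ε, s, hs⟩ := ih hac.le (hf.mono (Ioo_subset_Ioo_right hcb.le)) fun x hx h0 =>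
        Finset.mem_of_mem_insert_of_ne (hZ x ⟨hx.1, hx.2.trans hcb⟩ h0) hx.2.ne
      have hne : ∀ x ∈ Ioo c b, f x ≠ 0 := fun x hx h0 => by
        rcases Finset.mem_insert.mp (hZ x ⟨hac.trans hx.1, hx.2⟩ h0) with rfl | hxZ
        · exact hx.1.false
        · exact (hx.1.trans (hlt x hxZ)).false
      exact ⟨ε, hs.exists_extend hcb.le hfc (hf.mono (Ioo_subset_Ioo_left hac.le)) hne⟩
    · obtain ⟨ε, s, hs⟩ := ih hab hf fun x hx h0 =>
        Finset.mem_of_mem_insert_of_ne (hZ x hx h0) fun hxc => hc (hxc ▸ ⟨hx, h0⟩)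
      exact ⟨ε, s, hs.mono_pieces (Nat.le_succ _)⟩

theorem integral_abs_poly_alternating_general {f : ℝ → ℝ} {a b : ℝ} (hab : a ≤ b)
    (hf : ContinuousOn f (Ioo a b)) (hfi : IntervalIntegrable f volume a b) {r : ℕ}
    (Z : Finset ℝ) (hZ : ∀ x ∈ Ioo a b, f x = 0 → x ∈ Z) (hr : Z.card < r) :
    ∃ ε : ℝ, (ε = 1 ∨ ε = -1) ∧
      ∃ s : Fin (r + 1) → ℝ, Monotone s ∧ s 0 = a ∧ s (Fin.last r) = b ∧
        (∫ x in a..b, |f x|) =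
          ε * ∑ q : Fin r, (-1 : ℝ) ^ (q : ℕ) * ∫ x in (s q.castSucc)..(s q.succ), f x := by
  obtain ⟨ε, s, hs⟩ := exists_isAlternatingPartition hab hf Z hZ
  have hs_r : IsAlternatingPartition f a b ε r s := hs.mono_pieces hr
  refine ⟨ε, hs.sign_eq, fun i => s i, fun i j hij => hs.monotone hij, hs.left_eq,
    hs_r.right_eq r le_rfl, ?_⟩
  rw [hs_r.integral_abs_eq hfi, Finset.sum_range]
  rfl

/-- The integral of the absolute value of a nonzero polynomial of degree at most `r−1`
over `[0,t]` decomposes as a signed alternating sum of its integrals over consecutive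
subintervals `[s_q, s_{q+1}]`, `q = 0,…,r−1`, where `0 = s₀ ≤ s₁ ≤ ⋯ ≤ s_{r−1} ≤ s_r = t`. -/
theorem integral_abs_poly_alternating (r : ℕ) (hr : 1 ≤ r) (t : ℝ) (ht : 0 < t)
    (P : Polynomial ℝ) (hP : P ≠ 0) (hdeg : P.natDegree ≤ r - 1) :
    ∃ ε : ℝ, (ε = 1 ∨ ε = -1) ∧
      ∃ s : Fin (r + 1) → ℝ, Monotone s ∧ s 0 = 0 ∧ s (Fin.last r) = t ∧
        (∫ x in (0:ℝ)..t, |P.eval x|) =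
          ε * ∑ q : Fin r,
            (-1 : ℝ) ^ (q : ℕ) * ∫ x in (s q.castSucc)..(s q.succ), P.eval x := by
  have h_card : P.roots.toFinset.card < r :=
    (P.roots.toFinset_card_le.trans (P.card_roots'.trans hdeg)).trans_lt (Nat.sub_one_lt_of_lt hr)
  exact integral_abs_poly_alternating_general ht.le P.continuousOn
    (P.continuous.intervalIntegrable _ _) P.roots.toFinset
    (fun x _ hx => by simpa [hP] using hx) h_card
end

section
/- Fix reals α < β with μ := (β−α)/2 and ν := (β+α)/2, a time t > 0, and x₀ ∈ ℝ³. For ε ∈ {+1,−1} and parameters 0 ≤ s₁ ≤ s₂ ≤ t, let x = x^ε(s₁,s₂) ∈ ℝ³ be the parametrized boundary point of the triple integrator reach set, and for k = 1,2,3 define ρ_k := ((4−k)!/(2μ)) ( x(k) − Σ_{ℓ=k}^{3} (t^(ℓ−k)/(ℓ−k)!) x₀(ℓ) ) − (1/2) ( ε t^(4−k) + (ν/μ) t^(4−k) ). Then the quartic implicit equation of the bounding surface holds: ρ₃⁴ − 4 ρ₃ ρ₁ + 3 ρ₂² = 0. -/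
/-- The parametrized boundary point `x^ε(s₁,s₂) ∈ ℝ³` of the triple integrator reach
set (`0`-indexed `k : Fin 3`; the `1`-indexed exponent `4−k` becomes `3−k`):
`x^ε(k) = Σ_{ℓ≥k} (t^(ℓ−k)/(ℓ−k)!) x₀(ℓ) + ν t^(3−k)/(3−k)!`
`+ ε (μ/(3−k)!) [ t^(3−k) + 2 s₁^(3−k) − 2 s₂^(3−k) ]`,
with `μ = (β−α)/2`, `ν = (β+α)/2`. -/
noncomputable def tripleBdryPoint (α β t : ℝ) (x₀ : Fin 3 → ℝ) (ε s₁ s₂ : ℝ) :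
    Fin 3 → ℝ :=
  fun k =>
    (∑ ℓ : Fin 3, if (k : ℕ) ≤ (ℓ : ℕ) then
        t ^ ((ℓ : ℕ) - (k : ℕ)) / Nat.factorial ((ℓ : ℕ) - (k : ℕ)) * x₀ ℓ else 0) +
      ((β + α) / 2) * t ^ (3 - (k : ℕ)) / Nat.factorial (3 - (k : ℕ)) +
      ε * (((β - α) / 2) / Nat.factorial (3 - (k : ℕ))) *
        (t ^ (3 - (k : ℕ)) + 2 * s₁ ^ (3 - (k : ℕ)) - 2 * s₂ ^ (3 - (k : ℕ)))

/-- The normalized coordinates `ρ_k` of a point `x ∈ ℝ³` (`0`-indexed `k : Fin 3`):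
`ρ_k := ((3−k)!/(2μ)) (x(k) − Σ_{ℓ≥k} (t^(ℓ−k)/(ℓ−k)!) x₀(ℓ))`
`− (1/2)(ε t^(3−k) + (ν/μ) t^(3−k))`. -/
noncomputable def tripleRho (α β t : ℝ) (x₀ : Fin 3 → ℝ) (ε : ℝ) (x : Fin 3 → ℝ) :
    Fin 3 → ℝ :=
  fun k =>
    (Nat.factorial (3 - (k : ℕ)) / (2 * ((β - α) / 2))) *
        (x k - ∑ ℓ : Fin 3, if (k : ℕ) ≤ (ℓ : ℕ) then
          t ^ ((ℓ : ℕ) - (k : ℕ)) / Nat.factorial ((ℓ : ℕ) - (k : ℕ)) * x₀ ℓ else 0) -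
      (1 / 2) * (ε * t ^ (3 - (k : ℕ)) +
        (((β + α) / 2) / ((β - α) / 2)) * t ^ (3 - (k : ℕ)))

theorem normalized_coordinate_eq {K : Type*} [Field K] [NeZero (2 : K)] {μ f : K} (hμ : μ ≠ 0)
    (hf : f ≠ 0) (ν ε S T A B : K) :
    f / (2 * μ) * (S + ν * T / f + ε * (μ / f) * (T + 2 * A - 2 * B) - S) -
      1 / 2 * (ε * T + ν / μ * T) = ε * (A - B) := by
  field_simp
  ring

theorem tripleRho_tripleBdryPoint {α β : ℝ} (hαβ : α ≠ β) (t : ℝ) (x₀ : Fin 3 → ℝ)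
    (ε s₁ s₂ : ℝ) (k : Fin 3) :
    tripleRho α β t x₀ ε (tripleBdryPoint α β t x₀ ε s₁ s₂) k =
      ε * (s₁ ^ (3 - (k : ℕ)) - s₂ ^ (3 - (k : ℕ))) :=
  normalized_coordinate_eq (div_ne_zero (sub_ne_zero.mpr hαβ.symm) two_ne_zero)
    (Nat.cast_ne_zero.mpr (Nat.factorial_ne_zero _)) _ _ _ _ _ _

/- In terms of the signed difference `d = ε (u - v)` and the sum `σ = u + v`, the three signed
power differences are `d`, `d σ` and `d (3 σ² + d²) / 4`; the quartic eliminates `σ`. -/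
theorem quartic_signed_pow_sub_eq_zero {R : Type*} [CommRing R] {ε : R} (hε : ε ^ 2 = 1)
    (u v : R) :
    (ε * (u - v)) ^ 4 - 4 * (ε * (u - v)) * (ε * (u ^ 3 - v ^ 3)) +
      3 * (ε * (u ^ 2 - v ^ 2)) ^ 2 = 0 := by
  have square_eq : ε * (u ^ 2 - v ^ 2) = ε * (u - v) * (u + v) := by ring
  have cube_eq : 4 * (ε * (u ^ 3 - v ^ 3)) =
      ε * (u - v) * (3 * (u + v) ^ 2 + (ε * (u - v)) ^ 2) := by
    rw [mul_pow ε, hε]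
    ring
  linear_combination (-(ε * (u - v))) * cube_eq +
    3 * (ε * (u ^ 2 - v ^ 2) + ε * (u - v) * (u + v)) * square_eq

theorem triple_integrator_quartic_general {α β : ℝ} (hαβ : α ≠ β) (t : ℝ) (x₀ : Fin 3 → ℝ)
    {ε : ℝ} (hε : ε = 1 ∨ ε = -1) (s₁ s₂ : ℝ) :
    (tripleRho α β t x₀ ε (tripleBdryPoint α β t x₀ ε s₁ s₂) 2) ^ 4 -
        4 * tripleRho α β t x₀ ε (tripleBdryPoint α β t x₀ ε s₁ s₂) 2 *
          tripleRho α β t x₀ ε (tripleBdryPoint α β t x₀ ε s₁ s₂) 0 +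
        3 * (tripleRho α β t x₀ ε (tripleBdryPoint α β t x₀ ε s₁ s₂) 1) ^ 2 = 0 := by
  have rho_two : tripleRho α β t x₀ ε (tripleBdryPoint α β t x₀ ε s₁ s₂) 2 = ε * (s₁ - s₂) := by
    simpa using tripleRho_tripleBdryPoint hαβ t x₀ ε s₁ s₂ 2
  have rho_one : tripleRho α β t x₀ ε (tripleBdryPoint α β t x₀ ε s₁ s₂) 1 =
      ε * (s₁ ^ 2 - s₂ ^ 2) :=
    tripleRho_tripleBdryPoint hαβ t x₀ ε s₁ s₂ 1
  have rho_zero : tripleRho α β t x₀ ε (tripleBdryPoint α β t x₀ ε s₁ s₂) 0 =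
      ε * (s₁ ^ 3 - s₂ ^ 3) :=
    tripleRho_tripleBdryPoint hαβ t x₀ ε s₁ s₂ 0
  rw [rho_two, rho_one, rho_zero]
  exact quartic_signed_pow_sub_eq_zero (sq_eq_one_iff.mpr hε) s₁ s₂

/-- On the parametrized boundary of the triple integrator reach set, the quartic
implicit equation `ρ₃⁴ − 4 ρ₃ ρ₁ + 3 ρ₂² = 0` holds (`1`-indexed `ρ₁,ρ₂,ρ₃` are the
`0`-indexed `ρ 0, ρ 1, ρ 2`). -/
theorem triple_integrator_quartic (α β : ℝ) (hαβ : α < β) (t : ℝ) (ht : 0 < t)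
    (x₀ : Fin 3 → ℝ) (ε : ℝ) (hε : ε = 1 ∨ ε = -1) (s₁ s₂ : ℝ)
    (h₁ : 0 ≤ s₁) (h₂ : s₁ ≤ s₂) (h₃ : s₂ ≤ t) :
    (tripleRho α β t x₀ ε (tripleBdryPoint α β t x₀ ε s₁ s₂) 2) ^ 4 -
        4 * tripleRho α β t x₀ ε (tripleBdryPoint α β t x₀ ε s₁ s₂) 2 *
          tripleRho α β t x₀ ε (tripleBdryPoint α β t x₀ ε s₁ s₂) 0 +
        3 * (tripleRho α β t x₀ ε (tripleBdryPoint α β t x₀ ε s₁ s₂) 1) ^ 2 = 0 :=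
  triple_integrator_quartic_general hαβ.ne t x₀ hε s₁ s₂
end
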